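/- Let (X_n : n ≥ 0) be a Markov chain on a finite state space S with transition matrices (P_n : n ≥ 0). Suppose P_n(s,t) → P(s,t) as n → ∞ for all s,t ∈ S, where P is an irreducible and aperiodic stochastic matrix with stationary distribution π. Then almost surely, for every t₀ ∈ S, (1/N) Σ_{n=0}^{N−1} 1_{{X_n = t₀}} → π(t₀) as N → ∞, and for all s₀, t₀ ∈ S, (1/N) Σ_{n=0}^{N−1} 1_{{(X_n, X_{n+1}) = (s₀, t₀)}} → π(s₀)P(s₀, t₀) as N → ∞. -/

import Mathlib

/-! The centred transition indicators `D n = 1{X n = s, X (n+1) = t} - 1{X n = s} P n s t` are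
bounded by `1` and, by the Markov property, orthogonal to every function of the past
(`integral_past_mul_increment`). Hence their partial sums satisfy `E (S N)² ≤ N`; summability
of `E (S N / N)²` along the squares together with boundedness gives `S N / N → 0` almost surely
(`ae_tendsto_average_of_orthogonal`).

The rest is deterministic. Let `μ N` be the empirical distribution of states. Since `P n → Plim`,
Cesàro averaging shows that the empirical pair frequency of `(s, t)` differs from
`μ N s * Plim s t` by `o(1)`. Summing over `s` and telescoping, `μ N` is asymptotically invariant:
`μ N Plim - μ N → 0`, hence also `μ N Plim ^ k - μ N → 0`. When `Plim ^ k ≥ ε > 0` entrywise,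
`d ↦ d Plim ^ k` contracts vectors of total mass zero in `ℓ¹` by `1 - ε` (Doeblin), and so
`ε ‖μ N - π‖₁ ≤ ‖μ N Plim ^ k - μ N‖₁ → 0`. -/

open MeasureTheory Filter Topology

namespace MarkovChainLLN

/-- A stochastic matrix over the finite state space `S`. -/
def IsStochastic {S : Type*} [Fintype S] (P : S → S → ℝ) : Prop :=
  (∀ s t, 0 ≤ P s t) ∧ ∀ s, ∑ t, P s t = 1

/-- `(Xc n)` is a (possibly non-homogeneous) one-sided Markov chain on the finite
state space `S`, with transition matrices `(P n)`, defined on the probability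
space `(Ω, ℙ)`: this is the cylinder form of the Markov property
`ℙ(X_{n+1} = t ∣ X_n = s, …, X_0 = s_0) = P_n(s, t)`. -/
def IsMarkovChain {S : Type*} [Fintype S] {Ω : Type*} [MeasurableSpace Ω]
    (ℙ : Measure Ω) (Xc : ℕ → Ω → S) (P : ℕ → S → S → ℝ) : Prop :=
  ∀ (n : ℕ) (w : ℕ → S),
    ℙ {ω | ∀ i ≤ n + 1, Xc i ω = w i}
      = ℙ {ω | ∀ i ≤ n, Xc i ω = w i} * ENNReal.ofReal (P n (w n) (w (n + 1)))

end MarkovChainLLN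
namespace MarkovChainLLN

/-- Matrix multiplication for `S × S` matrices given as functions. -/
noncomputable def matMul {S : Type*} [Fintype S] (P Q : S → S → ℝ) : S → S → ℝ :=
  fun s t => ∑ u, P s u * Q u t

/-- Matrix powers. -/
noncomputable def matPow {S : Type*} [Fintype S] [DecidableEq S]
    (P : S → S → ℝ) : ℕ → S → S → ℝ
  | 0 => fun s t => if s = t then 1 else 0
  | k + 1 => matMul (matPow P k) P

/-! ### A strong law for bounded orthogonal variables -/

lemma integral_sq_sum_le {Ω : Type*} [MeasurableSpace Ω] (ℙ : Measure Ω) [IsProbabilityMeasure ℙ]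
    (D : ℕ → Ω → ℝ) (hm : ∀ n, Measurable (D n)) (hb : ∀ n ω, |D n ω| ≤ 1)
    (ho : ∀ i j, i < j → ∫ ω, D i ω * D j ω ∂ℙ = 0) (N : ℕ) :
    Integrable (fun ω => (∑ n ∈ Finset.range N, D n ω) ^ 2) ℙ ∧
      ∫ ω, (∑ n ∈ Finset.range N, D n ω) ^ 2 ∂ℙ ≤ N := by
  have hmul : ∀ i j, Integrable (fun ω => D i ω * D j ω) ℙ := by
    intro i j
    refine Integrable.of_bound ((hm i).mul (hm j)).aestronglyMeasurable 1 (ae_of_all _ fun ω => ?_)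
    rw [Real.norm_eq_abs, abs_mul]
    exact mul_le_one₀ (hb i ω) (abs_nonneg _) (hb j ω)
  induction N with
  | zero => simp
  | succ N ih =>
    obtain ⟨ih1, ih2⟩ := ih
    have hexp : (fun ω => (∑ n ∈ Finset.range (N + 1), D n ω) ^ 2) =
        fun ω => (∑ n ∈ Finset.range N, D n ω) ^ 2 +
          (2 * ∑ n ∈ Finset.range N, D n ω * D N ω + D N ω * D N ω) := by
      funext ω
      rw [Finset.sum_range_succ, ← Finset.sum_mul]
      ring
    have hc : Integrable (fun ω => ∑ n ∈ Finset.range N, D n ω * D N ω) ℙ :=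
      integrable_finsetSum _ fun n _ => hmul n N
    have hcz : ∫ ω, ∑ n ∈ Finset.range N, D n ω * D N ω ∂ℙ = 0 := by
      rw [integral_finsetSum _ fun n _ => hmul n N]
      exact Finset.sum_eq_zero fun n hn => ho n N (Finset.mem_range.1 hn)
    have hle : ∫ ω, D N ω * D N ω ∂ℙ ≤ 1 := by
      calc ∫ ω, D N ω * D N ω ∂ℙ ≤ ∫ _ω, (1 : ℝ) ∂ℙ := by
            refine integral_mono (hmul N N) (integrable_const _) fun ω => ?_
            have := abs_le.1 (hb N ω)
            show D N ω * D N ω ≤ 1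
            nlinarith
        _ = 1 := by simp
    have hrest : Integrable
        (fun ω => 2 * ∑ n ∈ Finset.range N, D n ω * D N ω + D N ω * D N ω) ℙ :=
      (hc.const_mul 2).add (hmul N N)
    rw [hexp]
    refine ⟨ih1.add hrest, ?_⟩
    rw [integral_add ih1 hrest,
      integral_add (hc.const_mul 2) (hmul N N), integral_const_mul, hcz]
    push_cast
    linarith

/-- Strong law for uniformly bounded, pairwise orthogonal variables. The second moments are
summable along `N = m ^ 2`, and boundedness controls the gaps between consecutive squares. -/
lemma ae_tendsto_average_of_orthogonal {Ω : Type*} [MeasurableSpace Ω] (ℙ : Measure Ω)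
    [IsProbabilityMeasure ℙ]
    (D : ℕ → Ω → ℝ) (hm : ∀ n, Measurable (D n)) (hb : ∀ n ω, |D n ω| ≤ 1)
    (ho : ∀ i j, i < j → ∫ ω, D i ω * D j ω ∂ℙ = 0) :
    ∀ᵐ ω ∂ℙ, Tendsto (fun N : ℕ => (N : ℝ)⁻¹ * ∑ n ∈ Finset.range N, D n ω) atTop (𝓝 0) := by
  set T : ℕ → Ω → ℝ := fun N ω => ∑ n ∈ Finset.range N, D n ω with hT
  have hTm : ∀ N, Measurable (T N) := fun N => Finset.measurable_fun_sum _ fun n _ => hm n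
  set f : ℕ → Ω → ℝ := fun m ω => (((m ^ 2 : ℕ) : ℝ)⁻¹ * T (m ^ 2) ω) ^ 2 with hf
  have hfm : ∀ m, Measurable (f m) := fun m => ((hTm _).const_mul _).pow_const 2
  have hlint : ∀ m, ∫⁻ ω, ENNReal.ofReal (f m ω) ∂ℙ ≤ ENNReal.ofReal (1 / (m : ℝ) ^ 2) := by
    intro m
    obtain ⟨h1, h2⟩ := integral_sq_sum_le ℙ D hm hb ho (m ^ 2)
    have hfe : f m = fun ω => ((((m ^ 2 : ℕ) : ℝ)⁻¹) ^ 2) * (T (m ^ 2) ω) ^ 2 := by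
      funext ω; simp only [hf]; ring
    have hfi : Integrable (f m) ℙ := by rw [hfe]; exact h1.const_mul _
    rw [← ofReal_integral_eq_lintegral_ofReal hfi (ae_of_all _ fun ω => sq_nonneg _)]
    apply ENNReal.ofReal_le_ofReal
    rw [hfe, integral_const_mul]
    calc _ ≤ ((((m ^ 2 : ℕ) : ℝ)⁻¹) ^ 2) * ((m ^ 2 : ℕ) : ℝ) :=
          mul_le_mul_of_nonneg_left h2 (sq_nonneg _)
      _ = 1 / (m : ℝ) ^ 2 := by
          rcases eq_or_ne m 0 with rfl | h
          · simp
          · push_cast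
            field_simp
  have hsum : ∫⁻ ω, ∑' m, ENNReal.ofReal (f m ω) ∂ℙ ≠ ⊤ := by
    rw [lintegral_tsum fun m => (hfm m).ennreal_ofReal.aemeasurable]
    refine ne_top_of_le_ne_top ?_ (ENNReal.tsum_le_tsum hlint)
    exact (Real.summable_one_div_nat_pow.2 (by norm_num)).tsum_ofReal_ne_top
  filter_upwards [ae_lt_top (Measurable.tsum fun m => (hfm m).ennreal_ofReal) hsum] with ω hω
  have h0 : Tendsto (fun m => f m ω) atTop (𝓝 0) := by
    have := (ENNReal.tendsto_toReal ENNReal.zero_ne_top).comp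
      (ENNReal.tendsto_atTop_zero_of_tsum_ne_top hω.ne)
    refine this.congr fun m => ?_
    exact ENNReal.toReal_ofReal (sq_nonneg _)
  have h1 : Tendsto (fun m : ℕ => |((m ^ 2 : ℕ) : ℝ)⁻¹ * T (m ^ 2) ω|) atTop (𝓝 0) := by
    have := h0.sqrt
    rw [Real.sqrt_zero] at this
    exact this.congr fun m => Real.sqrt_sq_eq_abs _
  have h2 : Tendsto (fun m : ℕ => |((m ^ 2 : ℕ) : ℝ)⁻¹ * T (m ^ 2) ω| + 2 * (m : ℝ)⁻¹)
      atTop (𝓝 0) := by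
    have := h1.add ((tendsto_inv_atTop_nhds_zero_nat (𝕜 := ℝ)).const_mul 2)
    simpa using this
  have hsq : Tendsto Nat.sqrt atTop atTop := by
    refine tendsto_atTop.2 fun b => ?_
    filter_upwards [eventually_ge_atTop (b * b)] with n hn using Nat.le_sqrt.2 hn
  refine squeeze_zero_norm' ?_ (h2.comp hsq)
  filter_upwards [eventually_ge_atTop 1] with N hN
  set m := Nat.sqrt N with hmdef
  have hm1 : 1 ≤ m := Nat.le_sqrt.2 (by simpa using hN)
  have hle : m ^ 2 ≤ N := Nat.sqrt_le' N
  have hlt : N ≤ m ^ 2 + 2 * m := by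
    have := Nat.sqrt_le_add N
    rw [← hmdef] at this
    nlinarith
  have hdiff : |T N ω - T (m ^ 2) ω| ≤ 2 * m := by
    simp only [hT]
    rw [← Finset.sum_Ico_eq_sub _ hle]
    calc _ ≤ ∑ n ∈ Finset.Ico (m ^ 2) N, |D n ω| := Finset.abs_sum_le_sum_abs _ _
      _ ≤ ∑ n ∈ Finset.Ico (m ^ 2) N, (1 : ℝ) := Finset.sum_le_sum fun n _ => hb n ω
      _ = ((N - m ^ 2 : ℕ) : ℝ) := by simp
      _ ≤ 2 * m := by
        have : N - m ^ 2 ≤ 2 * m := by omega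
        exact_mod_cast this
  have hmpos : (0 : ℝ) < m := by exact_mod_cast hm1
  have hm2 : (0 : ℝ) < ((m ^ 2 : ℕ) : ℝ) := by positivity
  have hinv : (N : ℝ)⁻¹ ≤ ((m ^ 2 : ℕ) : ℝ)⁻¹ := inv_anti₀ hm2 (by exact_mod_cast hle)
  have htri : |T N ω| ≤ |T (m ^ 2) ω| + 2 * m := by
    have := abs_sub_abs_le_abs_sub (T N ω) (T (m ^ 2) ω)
    linarith
  show ‖(N : ℝ)⁻¹ * T N ω‖ ≤ |((m ^ 2 : ℕ) : ℝ)⁻¹ * T (m ^ 2) ω| + 2 * (m : ℝ)⁻¹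
  rw [Real.norm_eq_abs, abs_mul, abs_mul, abs_of_nonneg (by positivity : (0 : ℝ) ≤ (N : ℝ)⁻¹),
    abs_of_pos (inv_pos.2 hm2)]
  calc _ ≤ ((m ^ 2 : ℕ) : ℝ)⁻¹ * (|T (m ^ 2) ω| + 2 * m) :=
        mul_le_mul hinv htri (abs_nonneg _) (inv_pos.2 hm2).le
    _ = _ := by
        push_cast
        field_simp

/-! ### Martingale differences of the chain -/

/-- The indicator of a transition `s → t` at time `n`, minus its conditional expectation given
the history up to time `n`. -/
noncomputable def increment {S Ω : Type*} [DecidableEq S] (Xc : ℕ → Ω → S) (P : ℕ → S → S → ℝ)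
    (s t : S) (n : ℕ) (ω : Ω) : ℝ :=
  (if Xc n ω = s ∧ Xc (n + 1) ω = t then (1 : ℝ) else 0) - if Xc n ω = s then P n s t else 0

lemma stochastic_le_one {S : Type*} [Fintype S] {P : S → S → ℝ} (hP : IsStochastic P) (s t : S) :
    P s t ≤ 1 := by
  rw [← hP.2 s]
  exact Finset.single_le_sum (fun u _ => hP.1 s u) (Finset.mem_univ t)

lemma abs_increment_le {S Ω : Type*} [Fintype S] [DecidableEq S] (Xc : ℕ → Ω → S)
    (P : ℕ → S → S → ℝ) (hP : ∀ n, IsStochastic (P n)) (s t : S) (n : ℕ) (ω : Ω) :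
    |increment Xc P s t n ω| ≤ 1 := by
  have h0 := (hP n).1 s t
  have h1 := stochastic_le_one (hP n) s t
  unfold increment
  rw [abs_le]
  split_ifs <;> constructor <;> linarith

lemma measurable_increment {S Ω : Type*} [DecidableEq S] [MeasurableSpace S]
    [MeasurableSingletonClass S] [MeasurableSpace Ω] (Xc : ℕ → Ω → S)
    (hX : ∀ n, Measurable (Xc n)) (P : ℕ → S → S → ℝ) (s t : S) (n : ℕ) :
    Measurable (increment Xc P s t n) := by
  have h1 : ∀ n s, MeasurableSet {ω | Xc n ω = s} := fun n s => hX n (measurableSet_singleton s)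
  exact (Measurable.ite ((h1 n s).inter (h1 (n + 1) t)) measurable_const measurable_const).sub
    (Measurable.ite (h1 n s) measurable_const measurable_const)

/-- The Markov property in martingale form: the increment at time `j` is orthogonal to every
function of the history `X 0, …, X j`. -/
lemma integral_past_mul_increment {S : Type*} [Fintype S] [DecidableEq S] [MeasurableSpace S]
    [MeasurableSingletonClass S] {Ω : Type*} [MeasurableSpace Ω]
    (ℙ : Measure Ω) [IsProbabilityMeasure ℙ]
    (Xc : ℕ → Ω → S) (hX : ∀ n, Measurable (Xc n))
    (P : ℕ → S → S → ℝ) (hP : ∀ n, IsStochastic (P n)) (hchain : IsMarkovChain ℙ Xc P)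
    (s t : S) (j : ℕ) (h : (Fin (j + 1) → S) → ℝ) :
    ∫ ω, h (fun i => Xc i ω) * increment Xc P s t j ω ∂ℙ = 0 := by
  have hms : ∀ n s, MeasurableSet {ω | Xc n ω = s} := fun n s => hX n (measurableSet_singleton s)
  have hcyl : ∀ (n : ℕ) (w : ℕ → S), MeasurableSet {ω | ∀ i ≤ n, Xc i ω = w i} := by
    intro n w
    have : {ω | ∀ i ≤ n, Xc i ω = w i} = ⋂ i, ⋂ (_ : i ≤ n), {ω | Xc i ω = w i} := by
      ext; simp
    rw [this]
    exact MeasurableSet.iInter fun i => MeasurableSet.iInter fun _ => hms i (w i)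
  -- A finite history is prolonged by the target state `t`, so that the cylinder of length
  -- `j + 1` around `ext w` describes a transition into `t` at time `j`.
  let ext : (Fin (j + 1) → S) → ℕ → S := fun w i => if hi : i < j + 1 then w ⟨i, hi⟩ else t
  have hext : ∀ w (i : Fin (j + 1)), ext w i = w i := fun w i => dif_pos i.2
  have hextj : ∀ w, ext w (j + 1) = t := fun w => by simp [ext]
  have hdec : (fun ω => h (fun i => Xc i ω) * increment Xc P s t j ω) = fun ω =>
      ∑ w : Fin (j + 1) → S, (if ext w j = s then h w else 0) *
        (({ω | ∀ i ≤ j + 1, Xc i ω = ext w i} : Set Ω).indicator (fun _ => (1 : ℝ)) ω -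
          P j (ext w j) (ext w (j + 1)) *
            ({ω | ∀ i ≤ j, Xc i ω = ext w i} : Set Ω).indicator (fun _ => (1 : ℝ)) ω) := by
    funext ω
    have hmem : ∀ w : Fin (j + 1) → S,
        (∀ i ≤ j, Xc i ω = ext w i) ↔ (fun i : Fin (j + 1) => Xc i ω) = w := by
      intro w
      constructor
      · intro H
        funext i
        rw [← hext w i]
        exact H i (Nat.lt_succ_iff.1 i.2)
      · rintro rfl i hi
        exact (hext (fun i => Xc i ω) ⟨i, Nat.lt_succ_iff.2 hi⟩).symm
    have hsucc : ∀ w : Fin (j + 1) → S, (∀ i ≤ j + 1, Xc i ω = ext w i) ↔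
        (∀ i ≤ j, Xc i ω = ext w i) ∧ Xc (j + 1) ω = t := by
      intro w
      constructor
      · intro H
        exact ⟨fun i hi => H i (by omega), by rw [H _ le_rfl, hextj]⟩
      · rintro ⟨H1, H2⟩ i hi
        rcases Nat.lt_or_ge j i with hji | hji
        · obtain rfl : i = j + 1 := by omega
          rw [H2, hextj]
        · exact H1 i hji
    rw [Finset.sum_eq_single (fun i : Fin (j + 1) => Xc i ω)]
    · have e : ext (fun i : Fin (j + 1) => Xc i ω) j = Xc j ω :=
        hext (fun i => Xc i ω) ⟨j, Nat.lt_succ_self j⟩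
      simp only [Set.indicator_apply, Set.mem_ofPred_eq, hsucc, hmem, true_and, hextj, e, if_true,
        increment]
      by_cases hs : Xc j ω = s
      · simp [hs]
      · simp [hs]
    · intro w _ hw
      have hw' : ¬ ∀ i ≤ j, Xc i ω = ext w i := fun H => hw ((hmem w).1 H).symm
      simp only [Set.indicator_apply, Set.mem_ofPred_eq, hsucc, hw', false_and, if_false]
      simp
    · simp
  have hi : ∀ (n : ℕ) (w : ℕ → S), Integrable
      (({ω | ∀ i ≤ n, Xc i ω = w i} : Set Ω).indicator (fun _ => (1 : ℝ))) ℙ :=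
    fun n w => (integrable_const 1).indicator (hcyl n w)
  have hterm : ∀ w : Fin (j + 1) → S, Integrable (fun ω => (if ext w j = s then h w else 0) *
        (({ω | ∀ i ≤ j + 1, Xc i ω = ext w i} : Set Ω).indicator (fun _ => (1 : ℝ)) ω -
          P j (ext w j) (ext w (j + 1)) *
            ({ω | ∀ i ≤ j, Xc i ω = ext w i} : Set Ω).indicator (fun _ => (1 : ℝ)) ω)) ℙ :=
    fun w => ((hi _ _).sub ((hi _ _).const_mul _)).const_mul _
  rw [hdec, integral_finsetSum _ fun w _ => hterm w]
  refine Finset.sum_eq_zero fun w _ => ?_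
  rw [integral_const_mul, integral_sub (hi _ _) ((hi _ _).const_mul _), integral_const_mul,
    integral_indicator_const _ (hcyl _ _), integral_indicator_const _ (hcyl _ _),
    measureReal_def, measureReal_def, hchain j (ext w), ENNReal.toReal_mul,
    ENNReal.toReal_ofReal ((hP j).1 _ _)]
  simp only [smul_eq_mul]
  ring

lemma ae_tendsto_average_increment {S : Type*} [Fintype S] [DecidableEq S] [MeasurableSpace S]
    [MeasurableSingletonClass S] {Ω : Type*} [MeasurableSpace Ω]
    (ℙ : Measure Ω) [IsProbabilityMeasure ℙ]
    (Xc : ℕ → Ω → S) (hX : ∀ n, Measurable (Xc n))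
    (P : ℕ → S → S → ℝ) (hP : ∀ n, IsStochastic (P n)) (hchain : IsMarkovChain ℙ Xc P)
    (s t : S) :
    ∀ᵐ ω ∂ℙ, Tendsto (fun N : ℕ => (N : ℝ)⁻¹ * ∑ n ∈ Finset.range N, increment Xc P s t n ω)
      atTop (𝓝 0) := by
  refine ae_tendsto_average_of_orthogonal ℙ _ (measurable_increment Xc hX P s t)
    (abs_increment_le Xc P hP s t) fun i j hij => ?_
  exact integral_past_mul_increment ℙ Xc hX P hP hchain s t j fun w =>
    (if w ⟨i, by omega⟩ = s ∧ w ⟨i + 1, by omega⟩ = t then (1 : ℝ) else 0) -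
      if w ⟨i, by omega⟩ = s then P i s t else 0

/-! ### Doeblin contraction and asymptotically invariant vectors -/

lemma matPow_row_sum {S : Type*} [Fintype S] [DecidableEq S] {P : S → S → ℝ}
    (hP : IsStochastic P) (k : ℕ) (s : S) : ∑ t, matPow P k s t = 1 := by
  induction k with
  | zero => simp [matPow]
  | succ k ih =>
    simp only [matPow, matMul]
    rw [Finset.sum_comm]
    simp only [← Finset.mul_sum, hP.2, mul_one, ih]

lemma sum_mul_matPow_succ {S : Type*} [Fintype S] [DecidableEq S] (P : S → S → ℝ) (k : ℕ)
    (v : S → ℝ) (t : S) :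
    ∑ s, v s * matPow P (k + 1) s t = ∑ u, (∑ s, v s * matPow P k s u) * P u t := by
  simp only [matPow, matMul, Finset.mul_sum, Finset.sum_mul]
  rw [Finset.sum_comm]
  simp only [mul_assoc]

/-- On vectors of total mass zero, a stochastic matrix with entries at least `ε` contracts the
`ℓ¹` norm by the factor `1 - ε`; the statement is the resulting lower bound for `d ↦ d Q - d`. -/
lemma doeblin_bound {S : Type*} [Fintype S] [Nonempty S] (Q : S → S → ℝ) {ε : ℝ} (hε : 0 ≤ ε)
    (hQ : ∀ s t, ε ≤ Q s t) (hQs : ∀ s, ∑ t, Q s t = 1) (d : S → ℝ) (hd : ∑ s, d s = 0) :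
    ε * ∑ s, |d s| ≤ ∑ t, |∑ s, d s * Q s t - d t| := by
  -- Subtracting the constant `ε` from `Q` does not change `d Q`.
  have h1 : ∀ t, |∑ s, d s * Q s t| ≤ ∑ s, |d s| * (Q s t - ε) := by
    intro t
    have : ∑ s, d s * Q s t = ∑ s, d s * (Q s t - ε) := by
      simp only [mul_sub, Finset.sum_sub_distrib, ← Finset.sum_mul, hd]
      ring
    rw [this]
    refine (Finset.abs_sum_le_sum_abs _ _).trans_eq (Finset.sum_congr rfl fun s _ => ?_)
    rw [abs_mul, abs_of_nonneg (sub_nonneg.2 (hQ s t))]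
  have h2 : ∑ t, ∑ s, |d s| * (Q s t - ε) = (1 - Fintype.card S * ε) * ∑ s, |d s| := by
    rw [Finset.sum_comm]
    simp only [← Finset.mul_sum, Finset.sum_sub_distrib, hQs, Finset.sum_const, Finset.card_univ,
      nsmul_eq_mul]
    rw [← Finset.sum_mul, mul_comm]
  have h3 : ∑ t, |d t| ≤ ∑ t, |∑ s, d s * Q s t - d t| + ∑ t, ∑ s, |d s| * (Q s t - ε) := by
    rw [← Finset.sum_add_distrib]
    refine Finset.sum_le_sum fun t _ => ?_
    have := abs_sub_abs_le_abs_sub (d t) (∑ s, d s * Q s t)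
    rw [abs_sub_comm] at this
    linarith [h1 t]
  have hcard : (1 : ℝ) ≤ Fintype.card S := by exact_mod_cast Fintype.card_pos
  have hn : 0 ≤ ∑ s, |d s| := Finset.sum_nonneg fun s _ => abs_nonneg _
  rw [h2] at h3
  have := mul_le_mul_of_nonneg_right hcard (mul_nonneg hε hn)
  linarith

/-- Asymptotically invariant vectors with vanishing total mass tend to zero. -/
lemma tendsto_zero_of_asymptotically_invariant {S : Type*} [Fintype S] [DecidableEq S] [Nonempty S]
    {P : S → S → ℝ} (hP : IsStochastic P) {k : ℕ} (hk : ∀ s t, 0 < matPow P k s t)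
    (d : ℕ → S → ℝ) (hd : ∀ᶠ N in atTop, ∑ s, d N s = 0)
    (hinv : ∀ t, Tendsto (fun N => ∑ s, d N s * P s t - d N t) atTop (𝓝 0)) (t : S) :
    Tendsto (fun N => d N t) atTop (𝓝 0) := by
  have hpow : ∀ j t, Tendsto (fun N => ∑ s, d N s * matPow P j s t - d N t) atTop (𝓝 0) := by
    intro j
    induction j with
    | zero => intro t; simp [matPow]
    | succ j ih =>
      intro t
      have := (tendsto_finsetSum Finset.univ fun u _ => (ih u).mul_const (P u t)).add (hinv t)
      simp only [zero_mul, Finset.sum_const_zero, add_zero] at this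
      refine this.congr fun N => ?_
      rw [sum_mul_matPow_succ]
      simp only [sub_mul, Finset.sum_sub_distrib]
      ring
  obtain ⟨⟨a, b⟩, hab⟩ := Finite.exists_min fun p : S × S => matPow P k p.1 p.2
  set ε := matPow P k a b with hε
  have hεpos : 0 < ε := hk a b
  have hlim : Tendsto (fun N => ε⁻¹ * ∑ t, |∑ s, d N s * matPow P k s t - d N t|)
      atTop (𝓝 0) := by
    have := (tendsto_finsetSum Finset.univ fun u _ => (hpow k u).abs).const_mul ε⁻¹
    simpa using this
  refine squeeze_zero_norm' ?_ hlim
  filter_upwards [hd] with N hN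
  have h1 := doeblin_bound (matPow P k) hεpos.le (fun s t => hab (s, t)) (matPow_row_sum hP k)
    (d N) hN
  have h2 : |d N t| ≤ ∑ s, |d N s| :=
    Finset.single_le_sum (f := fun s => |d N s|) (fun s _ => abs_nonneg _) (Finset.mem_univ t)
  rw [Real.norm_eq_abs, inv_mul_eq_div, le_div_iff₀ hεpos]
  nlinarith

/-! ### Pathwise conclusion -/

/-- Along any trajectory whose averaged increments vanish, the empirical frequencies of states and
of transitions converge. -/
lemma tendsto_frequencies {S : Type*} [Fintype S] [DecidableEq S]
    (x : ℕ → S) (P : ℕ → S → S → ℝ)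
    (Plim : S → S → ℝ) (hPlim : IsStochastic Plim)
    (hconv : ∀ s t : S, Tendsto (fun n => P n s t) atTop (𝓝 (Plim s t)))
    {k : ℕ} (hk : ∀ s t : S, 0 < matPow Plim k s t)
    (piv : S → ℝ) (hpiv_sum : ∑ s, piv s = 1)
    (hstat : ∀ t : S, ∑ s, piv s * Plim s t = piv t)
    (hinc : ∀ s t, Tendsto (fun N : ℕ => (N : ℝ)⁻¹ * ∑ n ∈ Finset.range N,
      ((if x n = s ∧ x (n + 1) = t then (1 : ℝ) else 0) - if x n = s then P n s t else 0))
      atTop (𝓝 0)) :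
    (∀ t₀ : S, Tendsto (fun N : ℕ =>
          (N : ℝ)⁻¹ * ∑ n ∈ Finset.range N, (if x n = t₀ then (1 : ℝ) else 0))
        atTop (𝓝 (piv t₀))) ∧
      (∀ s₀ t₀ : S, Tendsto (fun N : ℕ =>
          (N : ℝ)⁻¹ * ∑ n ∈ Finset.range N,
            (if x n = s₀ ∧ x (n + 1) = t₀ then (1 : ℝ) else 0))
        atTop (𝓝 (piv s₀ * Plim s₀ t₀))) := by
  have : Nonempty S := ⟨x 0⟩
  set μ : ℕ → S → ℝ := fun N t =>
    (N : ℝ)⁻¹ * ∑ n ∈ Finset.range N, (if x n = t then (1 : ℝ) else 0) with hμ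
  set ν : ℕ → S → S → ℝ := fun N s t =>
    (N : ℝ)⁻¹ * ∑ n ∈ Finset.range N, (if x n = s ∧ x (n + 1) = t then (1 : ℝ) else 0) with hν
  -- Replacing `P n` by its limit costs a Cesàro mean of a null sequence.
  have hpair : ∀ s t, Tendsto (fun N => ν N s t - μ N s * Plim s t) atTop (𝓝 0) := by
    intro s t
    have hz : Tendsto (fun n => if x n = s then P n s t - Plim s t else 0) atTop (𝓝 0) := by
      have h0 : Tendsto (fun n => |P n s t - Plim s t|) atTop (𝓝 0) := by
        simpa using ((hconv s t).sub_const (Plim s t)).abs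
      refine squeeze_zero_norm (fun n => ?_) h0
      split_ifs
      · exact le_rfl
      · simp
    have := (hinc s t).add hz.cesaro
    rw [add_zero] at this
    refine this.congr fun N => ?_
    simp only [hμ, hν]
    rw [mul_assoc, Finset.sum_mul, ← mul_add, ← mul_sub, ← Finset.sum_add_distrib,
      ← Finset.sum_sub_distrib]
    congr 1
    refine Finset.sum_congr rfl fun n _ => ?_
    by_cases h : x n = s
    · simp [h]
    · simp [h]
  have hshift : ∀ t, Tendsto (fun N => ∑ s, ν N s t - μ N t) atTop (𝓝 0) := by
    intro t
    have hform : ∀ N, ∑ s, ν N s t - μ N t = (N : ℝ)⁻¹ *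
        ((if x N = t then (1 : ℝ) else 0) - if x 0 = t then 1 else 0) := by
      intro N
      simp only [hμ, hν]
      rw [← Finset.mul_sum, ← mul_sub, Finset.sum_comm, ← Finset.sum_sub_distrib,
        ← Finset.sum_range_sub (fun n => if x n = t then (1 : ℝ) else 0)]
      congr 1
      refine Finset.sum_congr rfl fun n _ => ?_
      congr 1
      simp [ite_and]
    refine squeeze_zero_norm (fun N => ?_) (tendsto_inv_atTop_nhds_zero_nat (𝕜 := ℝ))
    rw [hform, norm_mul, Real.norm_of_nonneg (by positivity)]
    refine mul_le_of_le_one_right (by positivity) ?_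
    split_ifs <;> simp
  have hstate : ∀ t, Tendsto (fun N => μ N t) atTop (𝓝 (piv t)) := by
    intro t
    have hd := tendsto_zero_of_asymptotically_invariant hPlim hk (fun N s => μ N s - piv s)
      (by
        filter_upwards [eventually_ge_atTop 1] with N hN
        have hN0 : (N : ℝ) ≠ 0 := by positivity
        rw [Finset.sum_sub_distrib, hpiv_sum]
        simp only [hμ]
        rw [← Finset.mul_sum, Finset.sum_comm]
        simp [hN0])
      (by
        intro t
        have := (hshift t).sub (tendsto_finsetSum Finset.univ fun s _ => hpair s t)
        simp only [Finset.sum_const_zero, sub_zero] at this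
        refine this.congr fun N => ?_
        simp only [sub_mul, Finset.sum_sub_distrib, hstat]
        ring) t
    simpa using hd.add_const (piv t)
  refine ⟨hstate, fun s t => ?_⟩
  have := (hpair s t).add ((hstate s).mul_const (Plim s t))
  simp only [sub_add_cancel, zero_add] at this
  exact this

/-- **Proposition (Wen–Weiguo).**
If the transition matrices `P_n` of a Markov chain converge to an irreducible and
aperiodic stochastic matrix `P` with stationary distribution `π`, then almost
surely the empirical frequencies of states converge to `π(t₀)` and the empirical
frequencies of transitions converge to `π(s₀)P(s₀,t₀)`. -/
theorem markov_lln_convergent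
    {S : Type*} [Fintype S] [DecidableEq S] [MeasurableSpace S]
    [MeasurableSingletonClass S]
    {Ω : Type*} [MeasurableSpace Ω]
    (ℙ : Measure Ω) [IsProbabilityMeasure ℙ]
    (Xc : ℕ → Ω → S) (hXmeas : ∀ n, Measurable (Xc n))
    (P : ℕ → S → S → ℝ) (hP : ∀ n, IsStochastic (P n))
    (hchain : IsMarkovChain ℙ Xc P)
    (Plim : S → S → ℝ) (hPlim : IsStochastic Plim)
    (hconv : ∀ s t : S, Tendsto (fun n => P n s t) atTop (𝓝 (Plim s t)))
    (hprim : ∃ k : ℕ, ∀ s t : S, 0 < matPow Plim k s t)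
    (piv : S → ℝ) (hpiv_nonneg : ∀ s, 0 ≤ piv s) (hpiv_sum : ∑ s, piv s = 1)
    (hstat : ∀ t : S, ∑ s, piv s * Plim s t = piv t) :
    ∀ᵐ ω ∂ℙ,
      (∀ t₀ : S, Tendsto (fun N : ℕ =>
          (N : ℝ)⁻¹ * ∑ n ∈ Finset.range N, (if Xc n ω = t₀ then (1 : ℝ) else 0))
        atTop (𝓝 (piv t₀))) ∧
      (∀ s₀ t₀ : S, Tendsto (fun N : ℕ =>
          (N : ℝ)⁻¹ * ∑ n ∈ Finset.range N,
            (if Xc n ω = s₀ ∧ Xc (n + 1) ω = t₀ then (1 : ℝ) else 0))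
        atTop (𝓝 (piv s₀ * Plim s₀ t₀))) := by
  obtain ⟨k, hk⟩ := hprim
  have hinc : ∀ᵐ ω ∂ℙ, ∀ s t, Tendsto (fun N : ℕ =>
      (N : ℝ)⁻¹ * ∑ n ∈ Finset.range N, increment Xc P s t n ω) atTop (𝓝 0) :=
    ae_all_iff.2 fun s => ae_all_iff.2 fun t =>
      ae_tendsto_average_increment ℙ Xc hXmeas P hP hchain s t
  filter_upwards [hinc] with ω hω
  exact tendsto_frequencies (fun n => Xc n ω) P Plim hPlim hconv hk piv hpiv_sum hstat hω

end MarkovChainLLN
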